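/- For every integer w ≥ 1 and q ≥ 2 there exists a constant c > 0 (depending only on w and q) such that the following holds: for every L ≥ 1, every commuting-projector code on the lattice Λ = Fin L × Fin L whose projector supports S_a are each contained in some w×w square of the lattice, and every d ≥ 1 such that every region M ⊆ Λ with |M| < d is correctable, the number of encoded qubits satisfies k = log₂(rank Π) ≤ c·n/d², where n = L². -/

import Mathlib

/-!
The proof bounds the rank of `Π` by a partition of the lattice into two correctable regions and a
small remainder, following Bravyi, Poulin and Terhal, with ranks of matrices in place of entropies.

*Rank inequality* (`CommProjCode.rank_le_pow`). Let `Λ = A ⊔ B ⊔ C` with `A` and `B` correctable.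
Read the entries of `Π` as a tensor with legs `A`, `B`, `C` and a reference leg `R`. Grouping the
legs as `BC | AR` gives a matrix whose Gram matrix is `c_A ⊗ Π` by the Knill-Laflamme condition, so
it has rank `rank c_A * rank Π`. Moving the leg `C` to the other side divides the rank by at most
`q ^ |C|` and leaves a matrix of rank at most `rank c_B`. Hence
`rank c_A * rank Π ≤ q ^ |C| * rank c_B`; exchanging the roles of `A` and `B` and multiplying the
two inequalities gives `rank Π ≤ q ^ |C|`.

*Union lemma* (`CommProjCode.Correctable.union`). If no constraint touches both `M` and `N`, split
`Π = P₁ P₂` into constraints that touch `M` and constraints that do not. Sliding the factors past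
operators they commute with shows `Π a b Π = Π a Π b Π` for `a` on `M` and `b` on `N`, so the union
of two correctable regions is correctable.

*Expansion lemma* (`CommProjCode.Correctable.expand`). If `M` and `A` are correctable and no
constraint touches both `M` and the outside of `M ∪ A`, then `M ∪ A` is correctable. Correctability
of a region is equivalent to implementability of every logical operator on its complement. Starting
from an implementer outside `A`, written as a sum of products `aᵢ bᵢ` with `aᵢ` on `M` and `bᵢ`
outside `M ∪ A`, one replaces every `aᵢ` by its expectation value in the code.

*Tiling*. With `R` about `d / (4 w)`, the expansion lemma shows that every `R × R` square is
correctable, by growing it frame by frame, each frame having fewer than `d` sites. Cut the lattice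
into `R × R` tiles. The shrunken tiles (`cells`) are pairwise at distance at least `w`, so their
union `A` is correctable; so is the union `B` of the short strips between adjacent cells
(`corridors`). The remainder `C` consists of `O(w²)` sites per tile corner, so
`|C| = O(w² (L / R)²) = O(w⁴ L² / d²)`.
-/

open Matrix
open scoped Kronecker

noncomputable section

/-- The natural reindexing of configurations `Λ → Fin q` as pairs of configurations
on a region `S` and its complement. -/
def siteSplit (q : ℕ) {Λ : Type*} [DecidableEq Λ] (S : Finset Λ) :
    (Λ → Fin q) ≃ ({u : Λ // u ∈ S} → Fin q) × ({u : Λ // u ∉ S} → Fin q) :=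
  (Equiv.arrowCongr (Equiv.sumCompl (fun u : Λ => u ∈ S)).symm (Equiv.refl (Fin q))).trans
    (Equiv.sumArrowEquivProdArrow _ _ _)

/-- An operator is supported on `S ⊆ Λ` if, after the natural reindexing, it is the
Kronecker product of a matrix acting on the `S`-factor with the identity on the complement. -/
def SupportedOn (q : ℕ) {Λ : Type*} [Fintype Λ] [DecidableEq Λ] (S : Finset Λ)
    (O : Matrix (Λ → Fin q) (Λ → Fin q) ℂ) : Prop :=
  ∃ A : Matrix ({u : Λ // u ∈ S} → Fin q) ({u : Λ // u ∈ S} → Fin q) ℂ,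
    O.submatrix (siteSplit q S).symm (siteSplit q S).symm =
      A ⊗ₖ (1 : Matrix ({u : Λ // u ∉ S} → Fin q) ({u : Λ // u ∉ S} → Fin q) ℂ)

/-- A commuting-projector code on the set of sites `Λ`, with qudits of dimension `q`:
pairwise commuting orthogonal projectors `P a` supported on regions `S a`, whose product
(the codespace projector) is nonzero. -/
structure CommProjCode (q : ℕ) (Λ : Type*) [Fintype Λ] [DecidableEq Λ] where
  m : ℕ
  S : Fin m → Finset Λ
  P : Fin m → Matrix (Λ → Fin q) (Λ → Fin q) ℂ
  herm : ∀ a, (P a).IsHermitian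
  idem : ∀ a, P a * P a = P a
  comm : ∀ a b, P a * P b = P b * P a
  supp : ∀ a, SupportedOn q (S a) (P a)
  nonzero : ((List.finRange m).map P).prod ≠ 0

namespace CommProjCode

variable {q : ℕ} {Λ : Type*} [Fintype Λ] [DecidableEq Λ]

/-- The codespace projector `Π = Π_1 ⋯ Π_m`. -/
def proj (code : CommProjCode q Λ) : Matrix (Λ → Fin q) (Λ → Fin q) ℂ :=
  ((List.finRange code.m).map code.P).prod

/-- A region `M` is correctable iff `Π O Π = c(O) Π` for every operator `O` supported
on `M` (the Knill–Laflamme condition for the erasure of `M`). -/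
def Correctable (code : CommProjCode q Λ) (M : Finset Λ) : Prop :=
  ∀ O : Matrix (Λ → Fin q) (Λ → Fin q) ℂ, SupportedOn q M O →
    ∃ c : ℂ, code.proj * O * code.proj = c • code.proj

end CommProjCode

/-! ### Ranks and Gram matrices -/

section MatrixLemmas

open scoped ComplexOrder

/-- A matrix of rank `r` factors through `ℂ ^ r`, and the identity of `ℂ ^ r` factors through it. -/
lemma exists_rank_factors {m n : Type*} [Fintype m] [Fintype n] [DecidableEq m] [DecidableEq n]
    (M : Matrix m n ℂ) :
    (∃ (U : Matrix m (Fin M.rank) ℂ) (W : Matrix (Fin M.rank) n ℂ), M = U * W) ∧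
    ∃ (X : Matrix (Fin M.rank) m ℂ) (Y : Matrix n (Fin M.rank) ℂ), X * M * Y = 1 := by
  classical
  let f := M.mulVecLin
  let b : Module.Basis (Fin M.rank) ℂ (LinearMap.range f) := Module.finBasis ℂ (LinearMap.range f)
  constructor
  · refine ⟨of fun i k => (b k).1 i, of fun k j => b.repr ⟨f (Pi.single j 1), ⟨_, rfl⟩⟩ k, ?_⟩
    ext i j
    have h := congrArg (fun v : LinearMap.range f => v.1 i)
      (b.sum_repr ⟨f (Pi.single j 1), ⟨_, rfl⟩⟩)
    simp only [AddSubmonoidClass.coe_finsetSum, SetLike.val_smul, Finset.sum_apply,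
      Pi.smul_apply, smul_eq_mul] at h
    rw [mul_apply]
    simp only [of_apply]
    have h2 : f (Pi.single j 1) i = M i j := by simp [f]
    rw [← h2, ← h]
    exact Finset.sum_congr rfl fun k _ => mul_comm _ _
  · obtain ⟨g, hg⟩ := LinearMap.exists_extend (LinearMap.id : LinearMap.range f →ₗ[ℂ] _)
    choose y hy using fun k => (b k).2
    refine ⟨LinearMap.toMatrix' (b.equivFun.toLinearMap ∘ₗ g), of fun j k => y k j, ?_⟩
    ext k l
    have h : (LinearMap.toMatrix' (b.equivFun.toLinearMap ∘ₗ g)) *ᵥ (M *ᵥ y l) =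
        Pi.single l 1 := by
      rw [LinearMap.toMatrix'_mulVec]
      have h1 : M *ᵥ y l = (b l).1 := hy l
      have h2 : g (b l).1 = b l := LinearMap.congr_fun hg (b l)
      rw [h1, LinearMap.comp_apply, h2]
      ext k
      simp [Pi.single_apply, eq_comm]
    have h3 := congrFun h k
    rw [mulVec_mulVec] at h3
    rw [mul_apply, one_apply]
    simpa [mulVec, dotProduct, Pi.single_apply] using h3

lemma rank_pos_of_ne_zero {m n : Type*} [Fintype m] [Fintype n] [DecidableEq m] [DecidableEq n]
    {M : Matrix m n ℂ} (hM : M ≠ 0) : 0 < M.rank := by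
  rw [Nat.pos_iff_ne_zero]
  intro h0
  obtain ⟨⟨U, W, h⟩, -⟩ := exists_rank_factors M
  apply hM
  rw [h]
  ext i j
  rw [mul_apply]
  exact Finset.sum_eq_zero fun k _ => absurd k.2 (by omega)

/-- Only the lower bound of the multiplicativity of the rank is needed. -/
lemma rank_mul_le_rank_kronecker {m n m' n' : Type*} [Fintype m] [Fintype n] [Fintype m']
    [Fintype n'] [DecidableEq m] [DecidableEq n] [DecidableEq m'] [DecidableEq n']
    (A : Matrix m n ℂ) (B : Matrix m' n' ℂ) : A.rank * B.rank ≤ (A ⊗ₖ B).rank := by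
  obtain ⟨-, X, Y, h⟩ := exists_rank_factors A
  obtain ⟨-, X', Y', h'⟩ := exists_rank_factors B
  have key : (X ⊗ₖ X') * (A ⊗ₖ B) * (Y ⊗ₖ Y') = 1 := by
    rw [← mul_kronecker_mul, ← mul_kronecker_mul, h, h', one_kronecker_one]
  calc A.rank * B.rank =
        (1 : Matrix (Fin A.rank × Fin B.rank) (Fin A.rank × Fin B.rank) ℂ).rank := by
        rw [rank_one]; simp
    _ ≤ (A ⊗ₖ B).rank := by
        rw [← key]
        exact (rank_mul_le_left _ _).trans (rank_mul_le_right _ _)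

/-- Moving a tensor factor `γ` from the column index to the row index multiplies the rank by at
most the dimension of that factor. -/
lemma rank_regroup_le {α β γ ρ : Type*} [Fintype α] [Fintype β] [Fintype γ] [Fintype ρ]
    [DecidableEq α] [DecidableEq β] [DecidableEq γ] [DecidableEq ρ]
    (Ψ : α → β → γ → ρ → ℂ) :
    (of fun (p : β × γ) (s : α × ρ) => Ψ s.1 p.1 p.2 s.2).rank ≤
      Fintype.card γ *
        (of fun (b : β) (s : (α × γ) × ρ) => Ψ s.1.1 b s.1.2 s.2).rank := by
  set N : Matrix β ((α × γ) × ρ) ℂ := of fun b s => Ψ s.1.1 b s.1.2 s.2 with hN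
  obtain ⟨⟨U, W, h⟩, -⟩ := exists_rank_factors N
  have key : (of fun (p : β × γ) (s : α × ρ) => Ψ s.1 p.1 p.2 s.2) =
      (U ⊗ₖ (1 : Matrix γ γ ℂ)) * (of fun (t : Fin N.rank × γ) (s : α × ρ) =>
        W t.1 ((s.1, t.2), s.2)) := by
    ext ⟨b, c⟩ ⟨a, r⟩
    have h1 : Ψ a b c r = ∑ k, U b k * W k ((a, c), r) := by
      have := congrFun (congrFun h b) ((a, c), r)
      rwa [mul_apply] at this
    simp [mul_apply, Fintype.sum_prod_type, one_apply, h1]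
  rw [key]
  refine (rank_mul_le_left _ _).trans ((rank_le_card_width _).trans ?_)
  simp [mul_comm]

/-- If `C` commutes with the Gram matrix of `M`, right multiplication by `C` on `M` is implemented
by a left multiplication, simultaneously for `M` and its adjoint. The implementer is `M C G⁻ Mᴴ`,
with `G⁻` an inner inverse of the Gram matrix `G`. -/
lemma exists_left_implementer {m n : Type*} [Fintype m] [Fintype n] [DecidableEq n]
    (M : Matrix m n ℂ) (C : Matrix n n ℂ) (hC : C * (Mᴴ * M) = (Mᴴ * M) * C) :
    ∃ T : Matrix m m ℂ, T * M = M * C ∧ Mᴴ * T = C * Mᴴ := by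
  set G := Mᴴ * M with hG
  obtain ⟨H, hH⟩ : ∃ H, G * H * G = G := by
    obtain ⟨V, U, e, hV, hU, h⟩ := exists_rank_normal_form G
    set D := (fromBlocks 1 0 0 0 : Matrix (Fin G.rank ⊕ Fin (Fintype.card n - G.rank))
      (Fin G.rank ⊕ Fin (Fintype.card n - G.rank)) ℂ).submatrix e e
    have hD : D * D = D := by
      simp [D, submatrix_mul_equiv, fromBlocks_multiply]
    refine ⟨U * V, hV.mul_left_cancel (hU.mul_right_cancel ?_)⟩
    calc V * (G * (U * V) * G) * U = (V * G * U) * (V * G * U) := by noncomm_ring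
      _ = V * G * U := by rw [h, hD]
  refine ⟨M * C * H * Mᴴ, ?_, ?_⟩
  · have : Mᴴ * M * (C * H * G - C) = 0 := by
      rw [← hG, mul_sub, ← mul_assoc, ← mul_assoc, ← hC, mul_assoc C, mul_assoc C, hH, sub_self]
    have h0 := (conjTranspose_mul_self_mul_eq_zero M _).1 this
    rw [Matrix.mul_sub, sub_eq_zero] at h0
    refine Eq.trans ?_ h0
    simp only [hG, Matrix.mul_assoc]
  · have : (G * C * H - C) * (Mᴴ * M) = 0 := by
      rw [← hG, sub_mul, ← hC, mul_assoc, mul_assoc, ← mul_assoc G, hH, sub_self]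
    have h0 := (mul_conjTranspose_mul_self_eq_zero M _).1 this
    rw [Matrix.sub_mul, sub_eq_zero] at h0
    refine Eq.trans ?_ h0
    simp only [hG, Matrix.mul_assoc]

/-- One half of the rank inequality for a tripartite projector: the reduced state on `α`,
represented by the Knill-Laflamme matrix `c`, tensored with the code, has the rank of the
complementary reduced state on `β × γ`. -/
lemma rank_half {X α β γ : Type*} [Fintype X] [Fintype α] [Fintype β] [Fintype γ] [DecidableEq X]
    [DecidableEq α] [DecidableEq β] [DecidableEq γ] (Ψ : Matrix X X ℂ) (hΨ : Ψ.IsHermitian)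
    (eA : X ≃ α × β × γ) (eB : X ≃ β × α × γ)
    (hAB : ∀ a b c, eA.symm (a, b, c) = eB.symm (b, a, c))
    (cA : Matrix α α ℂ) (cB : Matrix β β ℂ)
    (hA : ∀ a a' r r', ∑ p, Ψ r (eA.symm (a, p)) * Ψ (eA.symm (a', p)) r' = cA a a' * Ψ r r')
    (hB : ∀ a a' r r', ∑ p, Ψ r (eB.symm (a, p)) * Ψ (eB.symm (a', p)) r' = cB a a' * Ψ r r') :
    cA.rank * Ψ.rank ≤ Fintype.card γ * cB.rank := by
  have hst : ∀ x y, star (Ψ x y) = Ψ y x := fun x y => hΨ.apply y x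
  let M : Matrix (β × γ) (α × X) ℂ := of fun p s => Ψ (eA.symm (s.1, p)) s.2
  let N : Matrix β ((α × γ) × X) ℂ := of fun b s => Ψ (eB.symm (b, s.1)) s.2
  have h1 : Mᴴ * M = cA ⊗ₖ Ψ := by
    ext ⟨a, r⟩ ⟨a', r'⟩
    simp only [mul_apply, conjTranspose_apply, M, of_apply, hst, kronecker_apply, hA]
  have h2 : N * Nᴴ = (Ψ.trace) • cBᵀ := by
    ext b b'
    simp only [mul_apply, conjTranspose_apply, N, of_apply, hst, Matrix.smul_apply, transpose_apply,
      smul_eq_mul, trace, diag_apply, Finset.sum_mul]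
    rw [Fintype.sum_prod_type_right]
    refine Finset.sum_congr rfl fun r _ => ?_
    rw [mul_comm, ← hB]
    exact Finset.sum_congr rfl fun k _ => mul_comm _ _
  have h3 : N.rank ≤ cB.rank := by
    rw [← rank_self_mul_conjTranspose, h2, ← rank_transpose cB]
    have : Ψ.trace • cBᵀ = (Ψ.trace • (1 : Matrix β β ℂ)) * cBᵀ := by simp
    rw [this]; exact rank_mul_le_right _ _
  have h4 : M.rank ≤ Fintype.card γ * N.rank := by
    have := rank_regroup_le fun a b c r => Ψ (eA.symm (a, b, c)) r
    simp only [hAB] at this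
    convert this using 2
    ext p s
    simp [M, ← hAB]
  calc cA.rank * Ψ.rank ≤ (cA ⊗ₖ Ψ).rank := rank_mul_le_rank_kronecker _ _
    _ = M.rank := by rw [← h1, rank_conjTranspose_mul_self]
    _ ≤ _ := h4.trans (Nat.mul_le_mul_left _ h3)

/-- A nonzero projector which satisfies the Knill-Laflamme conditions for each of the first two
tensor factors has rank at most the dimension of the third one. -/
lemma rank_le_of_tripartite {X α β γ : Type*} [Fintype X] [Fintype α] [Fintype β] [Fintype γ]
    [DecidableEq X]
    [DecidableEq α] [DecidableEq β] [DecidableEq γ] (Ψ : Matrix X X ℂ) (hΨ : Ψ.IsHermitian)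
    (hΨ2 : Ψ * Ψ = Ψ) (hΨ0 : Ψ ≠ 0) (eA : X ≃ α × β × γ) (eB : X ≃ β × α × γ)
    (hAB : ∀ a b c, eA.symm (a, b, c) = eB.symm (b, a, c))
    (cA : Matrix α α ℂ) (cB : Matrix β β ℂ)
    (hA : ∀ a a' r r', ∑ p, Ψ r (eA.symm (a, p)) * Ψ (eA.symm (a', p)) r' = cA a a' * Ψ r r')
    (hB : ∀ a a' r r', ∑ p, Ψ r (eB.symm (a, p)) * Ψ (eB.symm (a', p)) r' = cB a a' * Ψ r r') :
    Ψ.rank ≤ Fintype.card γ := by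
  have h1 := rank_half Ψ hΨ eA eB hAB cA cB hA hB
  have h2 := rank_half Ψ hΨ eB eA (fun b a c => (hAB a b c).symm) cB cA hB hA
  have hpos : 0 < cA.rank := by
    refine rank_pos_of_ne_zero fun hc => hΨ0 ?_
    ext r r'
    have h3 : ∀ a, ∑ p, Ψ r (eA.symm (a, p)) * Ψ (eA.symm (a, p)) r' = 0 := by
      intro a; rw [hA, hc]; simp
    rw [← hΨ2, mul_apply, ← eA.symm.sum_comp, Fintype.sum_prod_type]
    simp [h3]
  by_contra hlt
  push Not at hlt
  have h5 : cA.rank * Ψ.rank * Ψ.rank ≤ cA.rank * (Fintype.card γ * Fintype.card γ) := by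
    calc cA.rank * Ψ.rank * Ψ.rank ≤ Fintype.card γ * cB.rank * Ψ.rank := Nat.mul_le_mul_right _ h1
      _ = Fintype.card γ * (cB.rank * Ψ.rank) := by ring
      _ ≤ Fintype.card γ * (Fintype.card γ * cA.rank) := Nat.mul_le_mul_left _ h2
      _ = _ := by ring
  rw [mul_assoc] at h5
  have h6 := Nat.le_of_mul_le_mul_left h5 hpos
  nlinarith

end MatrixLemmas

/-! ### Operators supported on a region -/

section Support

variable {q : ℕ} {Λ : Type*} [DecidableEq Λ]

/-- A bijection from configurations to pairs `α × β` whose first component records exactly the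
restriction to `S` and whose second component records exactly the restriction to the complement. -/
def IsSplit {α β : Type*} (S : Finset Λ) (e : (Λ → Fin q) ≃ α × β) : Prop :=
  (∀ x y, (e x).1 = (e y).1 ↔ ∀ u ∈ S, x u = y u) ∧
    ∀ x y, (e x).2 = (e y).2 ↔ ∀ u ∉ S, x u = y u

lemma isSplit_siteSplit (S : Finset Λ) : IsSplit S (siteSplit q S) := by
  constructor <;> intro x y
  · constructor
    · intro h u hu
      exact congrFun h ⟨u, hu⟩
    · intro h; funext u; exact h u.1 u.2
  · constructor
    · intro h u hu
      exact congrFun h ⟨u, hu⟩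
    · intro h; funext u; exact h u.1 u.2

variable [Fintype Λ]

lemma IsSplit.swap {α β : Type*} {S : Finset Λ} {e : (Λ → Fin q) ≃ α × β} (he : IsSplit S e) :
    IsSplit Sᶜ (e.trans (Equiv.prodComm α β)) := by
  constructor <;> intro x y
  · simpa using he.2 x y
  · simpa using he.1 x y

/-- The entrywise form of being supported on `S`: the matrix is diagonal in the configuration
outside `S`, and its entries do not depend on that configuration. It makes no reference to a chosen
reindexing, so it serves to compare different ones. -/
def EntrySupp (S : Finset Λ) (O : Matrix (Λ → Fin q) (Λ → Fin q) ℂ) : Prop :=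
  (∀ x y, (∃ u ∉ S, x u ≠ y u) → O x y = 0) ∧
    ∀ x y x' y', (∀ u ∈ S, x u = x' u) → (∀ u ∈ S, y u = y' u) →
      (∀ u ∉ S, x u = y u) → (∀ u ∉ S, x' u = y' u) → O x y = O x' y'

lemma IsSplit.kronecker_iff {α β : Type*} [DecidableEq β] {S : Finset Λ}
    {e : (Λ → Fin q) ≃ α × β} (he : IsSplit S e) (O : Matrix (Λ → Fin q) (Λ → Fin q) ℂ) :
    (∃ A : Matrix α α ℂ, O.submatrix e.symm e.symm = A ⊗ₖ (1 : Matrix β β ℂ)) ↔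
      EntrySupp S O := by
  constructor
  · rintro ⟨A, hA⟩
    have hO : ∀ x y, O x y = A (e x).1 (e y).1 * (1 : Matrix β β ℂ) (e x).2 (e y).2 := by
      intro x y
      have := congrFun (congrFun hA (e x)) (e y)
      simpa [kronecker_apply] using this
    constructor
    · rintro x y ⟨u, hu, hxy⟩
      rw [hO, one_apply_ne, mul_zero]
      intro h
      exact hxy ((he.2 x y).1 h u hu)
    · intro x y x' y' h1 h2 h3 h4
      rw [hO, hO, (he.1 x x').2 h1, (he.1 y y').2 h2, (he.2 x y).2 h3, (he.2 x' y').2 h4,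
        one_apply_eq, one_apply_eq]
  · rintro ⟨h1, h2⟩
    rcases isEmpty_or_nonempty β with hβ | ⟨⟨b₀⟩⟩
    · exact ⟨0, by ext ⟨a, b⟩; exact (hβ.false b).elim⟩
    · refine ⟨of fun a a' => O (e.symm (a, b₀)) (e.symm (a', b₀)), ?_⟩
      ext ⟨a, b⟩ ⟨a', b'⟩
      rw [kronecker_apply, submatrix_apply, of_apply, one_apply]
      split_ifs with hb
      · subst hb
        rw [mul_one]
        apply h2
        · rw [← he.1]; simp
        · rw [← he.1]; simp
        · rw [← he.2]; simp
        · rw [← he.2]; simp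
      · rw [mul_zero]
        apply h1
        by_contra hcon
        push Not at hcon
        rw [← he.2] at hcon
        simp at hcon
        exact hb hcon

lemma supportedOn_iff (S : Finset Λ) (O : Matrix (Λ → Fin q) (Λ → Fin q) ℂ) :
    SupportedOn q S O ↔ EntrySupp S O :=
  (isSplit_siteSplit S).kronecker_iff O

lemma IsSplit.supportedOn_iff {α β : Type*} [DecidableEq β] {S : Finset Λ}
    {e : (Λ → Fin q) ≃ α × β} (he : IsSplit S e) (O : Matrix (Λ → Fin q) (Λ → Fin q) ℂ) :
    SupportedOn q S O ↔ ∃ A : Matrix α α ℂ, O = (A ⊗ₖ (1 : Matrix β β ℂ)).submatrix e e := by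
  rw [_root_.supportedOn_iff, ← he.kronecker_iff]
  refine exists_congr fun A => ⟨fun h => ?_, fun h => ?_⟩
  · rw [← h]; simp
  · rw [h]; simp

/-- Operators acting on the second factor of a split along `S` are those supported on `Sᶜ`. -/
lemma IsSplit.supportedOn_compl_iff {α β : Type*} [DecidableEq α] {S : Finset Λ}
    {e : (Λ → Fin q) ≃ α × β} (he : IsSplit S e) (O : Matrix (Λ → Fin q) (Λ → Fin q) ℂ) :
    SupportedOn q Sᶜ O ↔ ∃ B : Matrix β β ℂ, O = ((1 : Matrix α α ℂ) ⊗ₖ B).submatrix e e := by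
  rw [he.swap.supportedOn_iff]
  refine exists_congr fun B => ?_
  have : (B ⊗ₖ (1 : Matrix α α ℂ)).submatrix (e.trans (Equiv.prodComm α β))
      (e.trans (Equiv.prodComm α β)) = ((1 : Matrix α α ℂ) ⊗ₖ B).submatrix e e := by
    ext x y
    exact mul_comm (B (e x).2 (e y).2) ((1 : Matrix α α ℂ) (e x).1 (e y).1)
  rw [this]

lemma SupportedOn.mono {S T : Finset Λ} {O : Matrix (Λ → Fin q) (Λ → Fin q) ℂ}
    (h : SupportedOn q S O) (hST : S ⊆ T) : SupportedOn q T O := by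
  rw [supportedOn_iff] at h ⊢
  obtain ⟨h1, h2⟩ := h
  refine ⟨fun x y ⟨u, hu, hxy⟩ => h1 x y ⟨u, fun h => hu (hST h), hxy⟩, ?_⟩
  intro x y x' y' hx hy hxy hxy'
  by_cases hc : ∀ u ∉ S, x u = y u
  · refine h2 x y x' y' (fun u hu => hx u (hST hu)) (fun u hu => hy u (hST hu)) hc ?_
    intro u hu
    by_cases huT : u ∈ T
    · rw [← hx u huT, ← hy u huT, hc u hu]
    · exact hxy' u huT
  · push Not at hc
    obtain ⟨u, hu, hne⟩ := hc
    have huT : u ∈ T := by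
      by_contra h; exact hne (hxy u h)
    rw [h1 x y ⟨u, hu, hne⟩, h1 x' y' ⟨u, hu, by rwa [← hx u huT, ← hy u huT]⟩]

lemma SupportedOn.mul {S : Finset Λ} {O P : Matrix (Λ → Fin q) (Λ → Fin q) ℂ}
    (h : SupportedOn q S O) (h' : SupportedOn q S P) : SupportedOn q S (O * P) := by
  have he := isSplit_siteSplit (q := q) S
  rw [he.supportedOn_iff] at *
  obtain ⟨A, rfl⟩ := h
  obtain ⟨B, rfl⟩ := h'
  exact ⟨A * B, by rw [submatrix_mul_equiv, ← mul_kronecker_mul, one_mul]⟩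

lemma SupportedOn.conjTranspose {S : Finset Λ} {O : Matrix (Λ → Fin q) (Λ → Fin q) ℂ}
    (h : SupportedOn q S O) : SupportedOn q S Oᴴ := by
  have he := isSplit_siteSplit (q := q) S
  rw [he.supportedOn_iff] at *
  obtain ⟨A, rfl⟩ := h
  exact ⟨Aᴴ, by rw [conjTranspose_submatrix, conjTranspose_kronecker, conjTranspose_one]⟩

lemma SupportedOn.smul {S : Finset Λ} {O : Matrix (Λ → Fin q) (Λ → Fin q) ℂ} (c : ℂ)
    (h : SupportedOn q S O) : SupportedOn q S (c • O) := by
  rw [supportedOn_iff] at *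
  refine ⟨fun x y hxy => by simp [h.1 x y hxy], fun x y x' y' h1 h2 h3 h4 => ?_⟩
  simp [h.2 x y x' y' h1 h2 h3 h4]

lemma SupportedOn.sum {S : Finset Λ} {ι : Type*} (s : Finset ι)
    {O : ι → Matrix (Λ → Fin q) (Λ → Fin q) ℂ} (h : ∀ i, SupportedOn q S (O i)) :
    SupportedOn q S (∑ i ∈ s, O i) := by
  simp only [supportedOn_iff] at *
  refine ⟨fun x y hxy => ?_, fun x y x' y' h1 h2 h3 h4 => ?_⟩
  · rw [Matrix.sum_apply]; exact Finset.sum_eq_zero fun i _ => (h i).1 x y hxy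
  · rw [Matrix.sum_apply, Matrix.sum_apply]
    exact Finset.sum_congr rfl fun i _ => (h i).2 x y x' y' h1 h2 h3 h4

lemma SupportedOn.commute {S T : Finset Λ} {O P : Matrix (Λ → Fin q) (Λ → Fin q) ℂ}
    (h : SupportedOn q S O) (h' : SupportedOn q T P) (hST : Disjoint S T) : Commute O P := by
  have he := isSplit_siteSplit (q := q) S
  have h2 : SupportedOn q Sᶜ P := h'.mono (fun u hu => by
    rw [Finset.mem_compl]; exact fun hS => Finset.disjoint_left.1 hST hS hu)
  rw [he.supportedOn_iff] at h
  rw [he.supportedOn_compl_iff] at h2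
  obtain ⟨A, rfl⟩ := h
  obtain ⟨B, rfl⟩ := h2
  rw [Commute, SemiconjBy, submatrix_mul_equiv, submatrix_mul_equiv, ← mul_kronecker_mul,
    ← mul_kronecker_mul]
  simp

/-- Operators on a union of disjoint regions are sums of products of operators on the two
regions. -/
lemma SupportedOn.exists_decomp {S T : Finset Λ} {O : Matrix (Λ → Fin q) (Λ → Fin q) ℂ}
    (h : SupportedOn q (S ∪ T) O) (hST : Disjoint S T) :
    ∃ (n : ℕ) (a b : Fin n → Matrix (Λ → Fin q) (Λ → Fin q) ℂ),
      (∀ i, SupportedOn q S (a i)) ∧ (∀ i, SupportedOn q T (b i)) ∧ O = ∑ i, a i * b i := by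
  have he := isSplit_siteSplit (q := q) S
  set e := siteSplit q S
  rw [supportedOn_iff] at h
  let ι := ({u : Λ // u ∈ S} → Fin q) × ({u : Λ // u ∈ S} → Fin q)
  let f : Fin (Fintype.card ι) ≃ ι := (Fintype.equivFin ι).symm
  let a : ι → Matrix (Λ → Fin q) (Λ → Fin q) ℂ := fun i =>
    ((Matrix.single i.1 i.2 (1 : ℂ)) ⊗ₖ (1 : Matrix ({u : Λ // u ∉ S} → Fin q) _ ℂ)).submatrix e e
  let B : ι → Matrix ({u : Λ // u ∉ S} → Fin q) ({u : Λ // u ∉ S} → Fin q) ℂ := fun i =>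
    of fun b b' => O (e.symm (i.1, b)) (e.symm (i.2, b'))
  let b : ι → Matrix (Λ → Fin q) (Λ → Fin q) ℂ := fun i =>
    ((1 : Matrix ({u : Λ // u ∈ S} → Fin q) _ ℂ) ⊗ₖ B i).submatrix e e
  refine ⟨_, a ∘ f, b ∘ f, fun i => (he.supportedOn_iff _).2 ⟨_, rfl⟩, fun i => ?_, ?_⟩
  · suffices hsuff : ∀ i, SupportedOn q T (b i) from hsuff (f i)
    rintro ⟨p, p'⟩
    rw [supportedOn_iff]
    -- the restrictions to `S` and to `Sᶜ` of a reassembled configuration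
    have hS : ∀ p z, ∀ v, ∀ u ∈ S, (e.symm (p, z)) u = (e.symm (p, v)) u := by
      intro p z v; rw [← he.1]; simp
    have hSc : ∀ p z, ∀ u ∉ S, (e.symm (p, (e z).2)) u = z u := by
      intro p z; rw [← he.2]; simp
    have hb : ∀ x y, b (p, p') x y = if (e x).1 = (e y).1 then
        O (e.symm (p, (e x).2)) (e.symm (p', (e y).2)) else 0 := by
      intro x y
      simp [b, B, one_apply]
    have hT : ∀ u ∈ T, u ∉ S := fun u hu hS => Finset.disjoint_left.1 hST hS hu
    refine ⟨?_, ?_⟩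
    · rintro x y ⟨u, hu, hxy⟩
      rw [hb]
      split_ifs with hc
      · rw [he.1] at hc
        have huS : u ∉ S := fun h => hxy (hc u h)
        apply h.1
        refine ⟨u, by simp [hu, huS], ?_⟩
        rwa [hSc _ _ u huS, hSc _ _ u huS]
      · rfl
    · intro x y x' y' hx hy hxy hxy'
      have h1 : (e x).1 = (e y).1 := (he.1 x y).2 fun u hu => hxy u fun h => hT u h hu
      have h2 : (e x').1 = (e y').1 := (he.1 x' y').2 fun u hu => hxy' u fun h => hT u h hu
      rw [hb, hb, if_pos h1, if_pos h2]
      apply h.2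
      · intro u hu
        by_cases huS : u ∈ S
        · exact hS _ _ _ u huS
        · rw [hSc _ _ u huS, hSc _ _ u huS]
          exact hx u (by simpa [huS] using hu)
      · intro u hu
        by_cases huS : u ∈ S
        · exact hS _ _ _ u huS
        · rw [hSc _ _ u huS, hSc _ _ u huS]
          exact hy u (by simpa [huS] using hu)
      · intro u hu
        simp only [Finset.mem_union, not_or] at hu
        rw [hSc _ _ u hu.1, hSc _ _ u hu.1]
        exact hxy u hu.2
      · intro u hu
        simp only [Finset.mem_union, not_or] at hu
        rw [hSc _ _ u hu.1, hSc _ _ u hu.1]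
        exact hxy' u hu.2
  · have h1 : ∑ i, (a ∘ f) i * (b ∘ f) i = ∑ i : ι, a i * b i :=
      f.sum_comp fun i => a i * b i
    rw [h1]
    ext x y
    rw [Matrix.sum_apply]
    have h2 : ∀ i : ι, (a i * b i) x y =
        if i = ((e x).1, (e y).1) then O x y else 0 := by
      rintro ⟨p, p'⟩
      have : a (p, p') * b (p, p') = (Matrix.single p p' (1 : ℂ) ⊗ₖ B (p, p')).submatrix e e := by
        simp only [a, b]
        rw [submatrix_mul_equiv, ← mul_kronecker_mul]
        simp
      rw [this, submatrix_apply, kronecker_apply, Matrix.single_apply]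
      by_cases hc : p = (e x).1 ∧ p' = (e y).1
      · obtain ⟨rfl, rfl⟩ := hc
        simp [B]
      · rw [if_neg hc, if_neg (fun h => hc (Prod.ext_iff.1 h)), zero_mul]
    simp [h2]

end Support

/-! ### Correctable regions -/

namespace CommProjCode

section Correctability

open scoped ComplexOrder

variable {q : ℕ} {Λ : Type*} [Fintype Λ] [DecidableEq Λ] (code : CommProjCode q Λ)

/-- A product of constraints splits into the product `P₁` of those satisfying `p` and the product
`P₂` of the others. What matters about `P₁` and `P₂` is that they are projectors and which operators
they commute with. -/
lemma exists_list_split (p : Fin code.m → Prop) (l : List (Fin code.m)) :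
    ∃ P₁ P₂ : Matrix (Λ → Fin q) (Λ → Fin q) ℂ,
      (l.map code.P).prod = P₁ * P₂ ∧ P₁ * P₁ = P₁ ∧ P₂ * P₂ = P₂ ∧ P₁ᴴ = P₁ ∧ P₂ᴴ = P₂ ∧
      (∀ X, (∀ a, p a → Commute (code.P a) X) → Commute P₁ X) ∧
      (∀ X, (∀ a, ¬ p a → Commute (code.P a) X) → Commute P₂ X) := by
  have hcomm : ∀ a b, Commute (code.P a) (code.P b) := code.comm
  induction l with
  | nil =>
    exact ⟨1, 1, by simp, by simp, by simp, by simp, by simp, fun X _ => Commute.one_left X,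
      fun X _ => Commute.one_left X⟩
  | cons a l ih =>
    obtain ⟨P₁, P₂, h, h1, h2, h1', h2', hc1, hc2⟩ := ih
    have e1 : Commute P₁ (code.P a) := hc1 _ fun b _ => hcomm b a
    have e2 : Commute P₂ (code.P a) := hc2 _ fun b _ => hcomm b a
    have ha := code.idem a
    have hh : (code.P a)ᴴ = code.P a := code.herm a
    by_cases hp : p a
    · refine ⟨code.P a * P₁, P₂, by simp [h, mul_assoc], ?_, h2, ?_, h2', ?_, hc2⟩
      · rw [e1.mul_mul_mul_comm, ha, h1]
      · rw [conjTranspose_mul, h1', hh, e1.eq]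
      · exact fun X hX => (hX a hp).mul_left (hc1 X hX)
    · refine ⟨P₁, code.P a * P₂, ?_, h1, ?_, h1', ?_, hc1, ?_⟩
      · rw [List.map_cons, List.prod_cons, h, ← mul_assoc, ← e1.eq, mul_assoc]
      · rw [e2.mul_mul_mul_comm, ha, h2]
      · rw [conjTranspose_mul, h2', hh, e2.eq]
      · exact fun X hX => (hX a hp).mul_left (hc2 X hX)

/-- The codespace projector factors into the product of the constraints satisfying `p` and the
product of the remaining ones. -/
lemma exists_proj_split (p : Fin code.m → Prop) :
    ∃ P₁ P₂ : Matrix (Λ → Fin q) (Λ → Fin q) ℂ,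
      code.proj = P₁ * P₂ ∧ Commute P₁ P₂ ∧ P₁ * P₁ = P₁ ∧ P₂ * P₂ = P₂ ∧ P₁ᴴ = P₁ ∧ P₂ᴴ = P₂ ∧
      (∀ X, (∀ a, p a → Commute (code.P a) X) → Commute P₁ X) ∧
      (∀ X, (∀ a, ¬ p a → Commute (code.P a) X) → Commute P₂ X) := by
  obtain ⟨P₁, P₂, h, h1, h2, h1', h2', hc1, hc2⟩ := code.exists_list_split p (List.finRange code.m)
  exact ⟨P₁, P₂, h, hc1 _ fun a _ => (hc2 _ fun b _ => code.comm b a).symm, h1, h2, h1', h2',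
    hc1, hc2⟩

lemma proj_conjTranspose : code.projᴴ = code.proj := by
  obtain ⟨P₁, P₂, h, hc, -, -, h1, h2, -⟩ := code.exists_proj_split fun _ => True
  rw [h, conjTranspose_mul, h1, h2, hc.eq]

lemma proj_idem : code.proj * code.proj = code.proj := by
  obtain ⟨P₁, P₂, h, hc, h1, h2, -⟩ := code.exists_proj_split fun _ => True
  rw [h, hc.symm.mul_mul_mul_comm, h1, h2]

lemma proj_ne_zero : code.proj ≠ 0 := code.nonzero

/-- No constraint acts jointly on the two regions. -/
def Separated (M D : Finset Λ) : Prop := ∀ a, Disjoint (code.S a) M ∨ Disjoint (code.S a) D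

variable {code}

lemma compress_mul {R : Type*} [Monoid R] {P₁ P₂ O P : R} (hc : P₁ * P₂ = P₂ * P₁)
    (h1 : P₁ * P₁ = P₁) (h2 : P₂ * P₂ = P₂) (e1 : P₁ * P = P * P₁) (e2 : P₂ * O = O * P₂) :
    P₁ * P₂ * (O * P) * (P₁ * P₂) = P₁ * P₂ * O * (P₁ * P₂) * P * (P₁ * P₂) := by
  calc P₁ * P₂ * (O * P) * (P₁ * P₂) = P₁ * (P₂ * O) * (P * P₁) * P₂ := by simp only [mul_assoc]
    _ = P₁ * (O * P₂) * (P₁ * P) * P₂ := by rw [e1, e2]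
    _ = P₁ * (O * (P₂ * P₂)) * (P₁ * P₁ * P) * P₂ := by rw [h1, h2]
    _ = P₁ * (O * P₂) * (P₂ * P₁) * (P₁ * P) * P₂ := by simp only [mul_assoc]
    _ = P₁ * (P₂ * O) * (P₁ * P₂) * (P * P₁) * P₂ := by rw [← hc, e2, e1]
    _ = P₁ * P₂ * O * (P₁ * P₂) * P * (P₁ * P₂) := by simp only [mul_assoc]

/-- Operators on regions that no constraint connects can be compressed to the codespace
separately: constraints away from `M` slide past `O`, the others slide past `P`. -/
lemma Separated.proj_mul {M D : Finset Λ} (h : code.Separated M D)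
    {O P : Matrix (Λ → Fin q) (Λ → Fin q) ℂ} (hO : SupportedOn q M O) (hP : SupportedOn q D P) :
    code.proj * (O * P) * code.proj = code.proj * O * code.proj * P * code.proj := by
  obtain ⟨P₁, P₂, hp, hc, h1, h2, -, -, hc1, hc2⟩ :=
    code.exists_proj_split fun a => ¬ Disjoint (code.S a) M
  have e1 : P₁ * P = P * P₁ :=
    (hc1 P fun a ha => (code.supp a).commute hP ((h a).resolve_left ha)).eq
  have e2 : P₂ * O = O * P₂ :=
    (hc2 O fun a ha => (code.supp a).commute hO (not_not.1 ha)).eq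
  rw [hp, compress_mul hc.eq h1 h2 e1 e2]

lemma Separated.proj_mul_scalar {M D : Finset Λ} (h : code.Separated M D)
    {O P : Matrix (Λ → Fin q) (Λ → Fin q) ℂ} (hO : SupportedOn q M O) (hP : SupportedOn q D P)
    {c : ℂ} (hc : code.proj * O * code.proj = c • code.proj) :
    code.proj * (O * P) * code.proj = c • (code.proj * P * code.proj) := by
  rw [h.proj_mul hO hP, hc, Matrix.smul_mul, Matrix.smul_mul]

lemma Correctable.mono {M N : Finset Λ} (h : code.Correctable N) (hMN : M ⊆ N) :
    code.Correctable M := fun O hO => h O (hO.mono hMN)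

/-- The union of two correctable regions which no constraint connects is correctable. -/
lemma Correctable.union {M N : Finset Λ} (hM : code.Correctable M) (hN : code.Correctable N)
    (hMN : Disjoint M N) (h : code.Separated M N) : code.Correctable (M ∪ N) := by
  intro O hO
  obtain ⟨n, a, b, ha, hb, rfl⟩ := hO.exists_decomp hMN
  choose c hc using fun i => hM (a i) (ha i)
  choose c' hc' using fun i => hN (b i) (hb i)
  refine ⟨∑ i, c i * c' i, ?_⟩
  rw [Finset.mul_sum, Finset.sum_mul, Finset.sum_smul]
  refine Finset.sum_congr rfl fun i _ => ?_
  rw [h.proj_mul_scalar (ha i) (hb i) (hc i), hc' i, smul_smul]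

/-- The complement of `M` supports all logical operators: every `L` on the codespace is
implemented by an operator acting trivially on `M`. The operator is required to preserve both the
codespace and its orthogonal complement, which is what `d * Π = L = Π * d` says. -/
def Cleanable (code : CommProjCode q Λ) (M : Finset Λ) : Prop :=
  ∀ L, code.proj * L = L → L * code.proj = L →
    ∃ d, SupportedOn q Mᶜ d ∧ d * code.proj = L ∧ code.proj * d = L

/-- The Knill-Laflamme condition in coordinates adapted to the region. -/
lemma Correctable.gram {α β : Type*} [Fintype α] [Fintype β] [DecidableEq α] [DecidableEq β]
    {S : Finset Λ} (h : code.Correctable S) {e : (Λ → Fin q) ≃ α × β} (he : IsSplit S e) :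
    ∃ c : Matrix α α ℂ, ∀ a a' r r',
      ∑ p, code.proj r (e.symm (a, p)) * code.proj (e.symm (a', p)) r' =
        c a a' * code.proj r r' := by
  have h1 : ∀ a a', ∃ c : ℂ, code.proj *
      ((Matrix.single a a' (1 : ℂ) ⊗ₖ (1 : Matrix β β ℂ)).submatrix e e) * code.proj =
        c • code.proj := fun a a' => h _ ((he.supportedOn_iff _).2 ⟨_, rfl⟩)
  choose c hc using h1
  refine ⟨of c, fun a a' r r' => ?_⟩
  have h2 := congrFun (congrFun (hc a a') r) r'
  rw [Matrix.smul_apply, smul_eq_mul] at h2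
  rw [of_apply, ← h2, mul_apply, ← e.symm.sum_comp]
  simp only [mul_apply]
  have h3 : ∀ s : α × β, ∑ j, code.proj r j *
      ((Matrix.single a a' (1 : ℂ) ⊗ₖ (1 : Matrix β β ℂ)).submatrix e e) j (e.symm s) =
      if s.1 = a' then code.proj r (e.symm (a, s.2)) else 0 := by
    rintro ⟨s, t⟩
    rw [← e.symm.sum_comp, Fintype.sum_prod_type]
    simp only [submatrix_apply, Equiv.apply_symm_apply, kronecker_apply, Matrix.single_apply,
      one_apply]
    rw [Finset.sum_eq_single a, Finset.sum_eq_single t]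
    · by_cases hs : s = a'
      · simp [hs]
      · simp [hs, Ne.symm hs]
    · intro b _ hb; simp [hb]
    · simp
    · intro b _ hb; simp [Ne.symm hb]
    · simp
  simp only [h3, Fintype.sum_prod_type]
  rw [Finset.sum_eq_single a']
  · simp
  · intro b _ hb; simp [hb]
  · simp

/-- Cleaning lemma. Reshape the projector into the matrix `M` whose rows are the configurations
outside `A`. By the Knill-Laflamme condition its Gram matrix is a product `c ⊗ Π`, which commutes
with `1 ⊗ L` for logical `L`; hence `L` can be implemented on the row index alone. -/
lemma Correctable.cleanable {A : Finset Λ} (h : code.Correctable A) : code.Cleanable A := by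
  classical
  intro L hL hL'
  have he := isSplit_siteSplit (q := q) A
  set e := siteSplit q A
  obtain ⟨c, hc⟩ := h.gram he
  set Ψ := code.proj with hΨ
  have hst : ∀ x y, star (Ψ x y) = Ψ y x := fun x y =>
    congrFun (congrFun code.proj_conjTranspose y) x
  let M : Matrix ({u : Λ // u ∉ A} → Fin q) (({u : Λ // u ∈ A} → Fin q) × (Λ → Fin q)) ℂ :=
    of fun p s => Ψ (e.symm (s.1, p)) s.2
  have hG : Mᴴ * M = c ⊗ₖ Ψ := by
    ext ⟨a, r⟩ ⟨a', r'⟩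
    simp only [mul_apply, conjTranspose_apply, M, of_apply, hst, kronecker_apply, hc]
  obtain ⟨T, hT1, hT2⟩ := exists_left_implementer M
    ((1 : Matrix ({u : Λ // u ∈ A} → Fin q) _ ℂ) ⊗ₖ L) (by
      rw [hG, ← mul_kronecker_mul, ← mul_kronecker_mul, hL, hL', one_mul, mul_one])
  refine ⟨((1 : Matrix ({u : Λ // u ∈ A} → Fin q) _ ℂ) ⊗ₖ T).submatrix e e,
    (he.supportedOn_compl_iff _).2 ⟨_, rfl⟩, ?_, ?_⟩
  · ext x r
    obtain ⟨⟨a, b⟩, rfl⟩ := e.symm.surjective x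
    have h1 := congrFun (congrFun hT1 b) (a, r)
    rw [mul_apply, mul_apply, Fintype.sum_prod_type] at h1
    rw [mul_apply, ← e.symm.sum_comp, Fintype.sum_prod_type]
    simp only [M, of_apply, kronecker_apply, submatrix_apply, Equiv.apply_symm_apply, one_apply,
      ite_mul, one_mul, zero_mul, mul_ite, mul_zero] at h1 ⊢
    have h2 : ∑ s, Ψ (e.symm (a, b)) s * L s r = L (e.symm (a, b)) r := by
      rw [← mul_apply, hL]
    rw [Finset.sum_comm] at h1 ⊢
    simpa [h2] using h1
  · ext r x
    obtain ⟨⟨a, b⟩, rfl⟩ := e.symm.surjective x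
    have h1 := congrFun (congrFun hT2 (a, r)) b
    rw [mul_apply, mul_apply, Fintype.sum_prod_type] at h1
    rw [mul_apply, ← e.symm.sum_comp, Fintype.sum_prod_type]
    simp only [M, of_apply, kronecker_apply, submatrix_apply, Equiv.apply_symm_apply, one_apply,
      ite_mul, one_mul, zero_mul, mul_ite, mul_zero, conjTranspose_apply, hst] at h1 ⊢
    have h2 : ∑ s, L r s * Ψ s (e.symm (a, b)) = L r (e.symm (a, b)) := by
      rw [← mul_apply, hL']
    rw [Finset.sum_comm] at h1 ⊢
    simpa [h2] using h1

/-- An operator on the codespace that commutes with all operators on the codespace is a scalar. -/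
lemma scalar_of_commute {X : Matrix (Λ → Fin q) (Λ → Fin q) ℂ} (h1 : code.proj * X = X)
    (h2 : X * code.proj = X)
    (h : ∀ L, code.proj * L = L → L * code.proj = L → X * L = L * X) :
    ∃ c : ℂ, X = c • code.proj := by
  set Ψ := code.proj with hΨ
  obtain ⟨y, j, hyj⟩ : ∃ y j, Ψ y j ≠ 0 := by
    by_contra hcon
    push Not at hcon
    exact code.proj_ne_zero (by ext y j; exact hcon y j)
  refine ⟨X y j / Ψ y j, ?_⟩
  -- Compare `X` with the logical operator obtained by compressing a matrix unit.
  ext i x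
  have hL := h (Ψ * Matrix.single x y 1 * Ψ)
    (by rw [← mul_assoc, ← mul_assoc, code.proj_idem])
    (by rw [mul_assoc, code.proj_idem])
  have h3 : X * Matrix.single x y 1 * Ψ = Ψ * Matrix.single x y 1 * X := by
    calc X * Matrix.single x y 1 * Ψ = X * Ψ * Matrix.single x y 1 * Ψ := by rw [h2]
      _ = X * (Ψ * Matrix.single x y 1 * Ψ) := by noncomm_ring
      _ = Ψ * Matrix.single x y 1 * (Ψ * X) := by rw [hL, mul_assoc]
      _ = _ := by rw [h1]
  have h4 := congrFun (congrFun h3 i) j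
  have h5 : ∀ A B : Matrix (Λ → Fin q) (Λ → Fin q) ℂ,
      (A * (Matrix.single x y (1 : ℂ) : Matrix (Λ → Fin q) (Λ → Fin q) ℂ) * B) i j =
        A i x * B y j := by
    intro A B
    rw [mul_apply, Finset.sum_eq_single y]
    · rw [mul_single_apply_same, mul_one]
    · intro z _ hz
      rw [mul_single_apply_of_ne (hbj := hz), zero_mul]
    · simp
  rw [h5, h5] at h4
  rw [Matrix.smul_apply, smul_eq_mul]
  field_simp
  rw [h4, mul_comm]

/-- The converse of the cleaning lemma: an operator on `M` commutes with the implementers of all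
logical operators outside `M`, so its compression is central in the algebra of logical operators. -/
lemma Cleanable.correctable {M : Finset Λ} (h : code.Cleanable M) : code.Correctable M := by
  intro O hO
  have hi := code.proj_idem
  refine scalar_of_commute (by rw [← mul_assoc, ← mul_assoc, hi]) (by rw [mul_assoc, hi]) ?_
  intro L hL hL'
  obtain ⟨d, hd, h1, h2⟩ := h L hL hL'
  have hc : O * d = d * O := (hO.commute hd disjoint_compl_right).eq
  calc code.proj * O * code.proj * L = code.proj * O * (code.proj * L) := by noncomm_ring
    _ = code.proj * (O * d) * code.proj := by rw [hL, ← h1]; noncomm_ring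
    _ = L * O * code.proj := by rw [hc, ← h2]; noncomm_ring
    _ = L * code.proj * O * code.proj := by rw [hL']
    _ = L * (code.proj * O * code.proj) := by noncomm_ring

/-- If `∑ aᵢ bᵢ` implements the logical operator `L` and the `aᵢ` live on a correctable region
detached from the support of the `bᵢ`, replacing each `aᵢ` by its expectation value still
implements `L`. The compression of `d = ∑ cᵢ bᵢ` to the codespace is `L`, and that of `dᴴ d` is
`Lᴴ L`; hence `d` leaks nothing out of the codespace. -/
lemma slice_mul_proj {M D : Finset Λ} (hs : code.Separated M D) (hMD : Disjoint M D) {n : ℕ}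
    {a b : Fin n → Matrix (Λ → Fin q) (Λ → Fin q) ℂ} {c : Fin n → ℂ}
    (ha : ∀ i, SupportedOn q M (a i)) (hb : ∀ i, SupportedOn q D (b i))
    (hc : ∀ i, code.proj * a i * code.proj = c i • code.proj)
    {L : Matrix (Λ → Fin q) (Λ → Fin q) ℂ} (hL : code.proj * L = L)
    (hab : (∑ i, a i * b i) * code.proj = L) : (∑ i, c i • b i) * code.proj = L := by
  set Ψ := code.proj with hΨ
  have hΨh : Ψᴴ = Ψ := code.proj_conjTranspose
  have hΨi : Ψ * Ψ = Ψ := code.proj_idem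
  set d := ∑ i, c i • b i with hd
  have hdD : SupportedOn q D d := SupportedOn.sum _ fun i => (hb i).smul _
  have key : ∀ e, SupportedOn q D e → Ψ * e * L = Ψ * e * d * Ψ := by
    intro e he
    rw [← hab, hd]
    simp only [Finset.mul_sum, Finset.sum_mul]
    refine Finset.sum_congr rfl fun i _ => ?_
    have h1 : e * a i = a i * e := (he.commute (ha i) hMD.symm).eq
    calc Ψ * e * (a i * b i * Ψ) = Ψ * (e * a i) * b i * Ψ := by noncomm_ring
      _ = Ψ * (a i * (e * b i)) * Ψ := by rw [h1]; noncomm_ring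
      _ = c i • (Ψ * (e * b i) * Ψ) := hs.proj_mul_scalar (ha i) (he.mul (hb i)) (hc i)
      _ = Ψ * e * (c i • b i) * Ψ := by
        rw [Matrix.mul_smul, Matrix.smul_mul]; congr 1; noncomm_ring
  have h1 : Ψ * d * Ψ = L := by
    rw [← hL, ← hab, hd]
    simp only [Finset.mul_sum, Finset.sum_mul]
    refine Finset.sum_congr rfl fun i _ => ?_
    rw [← mul_assoc, hs.proj_mul_scalar (ha i) (hb i) (hc i), Matrix.mul_smul, Matrix.smul_mul]
  have h2 : Ψ * dᴴ * L = Ψ * dᴴ * d * Ψ := key _ hdD.conjTranspose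
  have h3 : (d * Ψ - L)ᴴ * (d * Ψ - L) = 0 := by
    have h4 : (d * Ψ - L)ᴴ = Ψ * dᴴ - Ψ * dᴴ * Ψ := by
      rw [← h1]; simp [conjTranspose_mul, hΨh, mul_assoc]
    rw [h4, sub_mul, mul_sub, mul_sub, h2]
    have h5 : Ψ * dᴴ * Ψ * (d * Ψ) = Ψ * dᴴ * L := by rw [← h1]; noncomm_ring
    have h6 : Ψ * dᴴ * Ψ * L = Ψ * dᴴ * L := by rw [mul_assoc _ Ψ L, hL]
    rw [h5, h6, h2]; noncomm_ring
  exact sub_eq_zero.1 (conjTranspose_mul_self_eq_zero.1 h3)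

/-- A correctable region stays correctable when enlarged by a correctable region that shields it
from the rest of the lattice. -/
lemma Correctable.expand {M A : Finset Λ} (hM : code.Correctable M) (hA : code.Correctable A)
    (hs : code.Separated M (M ∪ A)ᶜ) : code.Correctable (M ∪ A) := by
  apply Cleanable.correctable
  intro L hL hL'
  obtain ⟨T, hT, h1, h2⟩ := hA.cleanable L hL hL'
  have hMD : Disjoint M (M ∪ A)ᶜ :=
    Finset.disjoint_left.2 fun u hu => by simp [hu]
  have hAc : Aᶜ ⊆ M ∪ (M ∪ A)ᶜ := by
    intro u hu
    simp only [Finset.mem_union, Finset.mem_compl] at hu ⊢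
    tauto
  obtain ⟨n, a, b, ha, hb, rfl⟩ := (hT.mono hAc).exists_decomp hMD
  choose c hc using fun i => hM (a i) (ha i)
  refine ⟨∑ i, c i • b i, SupportedOn.sum _ fun i => (hb i).smul _,
    slice_mul_proj hs hMD ha hb hc hL h1, ?_⟩
  have h3 := slice_mul_proj (c := fun i => star (c i)) (L := Lᴴ) hs hMD
    (fun i => (ha i).conjTranspose) (fun i => (hb i).conjTranspose)
    (fun i => by
      have := congrArg conjTranspose (hc i)
      simpa [conjTranspose_mul, code.proj_conjTranspose, mul_assoc] using this)
    (by rw [← hL', conjTranspose_mul, code.proj_conjTranspose, ← mul_assoc, code.proj_idem])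
    (by
      rw [← h2, conjTranspose_mul, code.proj_conjTranspose, conjTranspose_sum]
      congr 1
      refine Finset.sum_congr rfl fun i _ => ?_
      rw [conjTranspose_mul]
      exact ((ha i).conjTranspose.commute (hb i).conjTranspose hMD).eq)
  have h4 := congrArg conjTranspose h3
  simpa [conjTranspose_mul, conjTranspose_sum, code.proj_conjTranspose] using h4

/-- If the lattice is partitioned into two correctable regions and a remainder `C`, the codespace
has dimension at most `q ^ |C|`. -/
lemma rank_le_pow {A B C : Finset Λ} (hA : code.Correctable A) (hB : code.Correctable B)
    (hAB : Disjoint A B) (hC : C = (A ∪ B)ᶜ) : code.proj.rank ≤ q ^ C.card := by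
  classical
  have hCA : ∀ u ∈ C, u ∉ A := fun u hu => by
    rw [hC, Finset.mem_compl, Finset.mem_union, not_or] at hu; exact hu.1
  have hCB : ∀ u ∈ C, u ∉ B := fun u hu => by
    rw [hC, Finset.mem_compl, Finset.mem_union, not_or] at hu; exact hu.2
  have hcov : ∀ u, u ∉ A → u ∉ B → u ∈ C := fun u h1 h2 => by simp [hC, h1, h2]
  have hBA : ∀ u ∈ B, u ∉ A := fun u hu h => Finset.disjoint_left.1 hAB h hu
  let f : (Λ → Fin q) → ({u // u ∈ A} → Fin q) × ({u // u ∈ B} → Fin q) × ({u // u ∈ C} → Fin q) :=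
    fun x => (fun u => x u.1, fun u => x u.1, fun u => x u.1)
  have hf : Function.Bijective f := by
    constructor
    · intro x y h
      simp only [f, Prod.mk.injEq] at h
      funext u
      by_cases h1 : u ∈ A
      · exact congrFun h.1 ⟨u, h1⟩
      · by_cases h2 : u ∈ B
        · exact congrFun h.2.1 ⟨u, h2⟩
        · exact congrFun h.2.2 ⟨u, hcov u h1 h2⟩
    · rintro ⟨a, b, c⟩
      refine ⟨fun u => if h1 : u ∈ A then a ⟨u, h1⟩ else if h2 : u ∈ B then b ⟨u, h2⟩ else
        c ⟨u, hcov u h1 h2⟩, ?_⟩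
      simp only [f, Prod.mk.injEq]
      refine ⟨?_, ?_, ?_⟩
      · funext u; simp [u.2]
      · funext u; simp [u.2, hBA u.1 u.2]
      · funext u; simp [hCA u.1 u.2, hCB u.1 u.2]
  let eA := Equiv.ofBijective f hf
  let sw : ({u // u ∈ A} → Fin q) × ({u // u ∈ B} → Fin q) × ({u // u ∈ C} → Fin q) ≃
      ({u // u ∈ B} → Fin q) × ({u // u ∈ A} → Fin q) × ({u // u ∈ C} → Fin q) :=
    { toFun := fun s => (s.2.1, s.1, s.2.2)
      invFun := fun s => (s.2.1, s.1, s.2.2)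
      left_inv := fun _ => rfl
      right_inv := fun _ => rfl }
  have heA : IsSplit A eA := by
    constructor <;> intro x y
    · exact ⟨fun h u hu => congrFun h ⟨u, hu⟩, fun h => funext fun u => h u.1 u.2⟩
    · constructor
      · intro h u hu
        have h' := Prod.ext_iff.1 h
        by_cases h2 : u ∈ B
        · exact congrFun h'.1 ⟨u, h2⟩
        · exact congrFun h'.2 ⟨u, hcov u hu h2⟩
      · intro h
        exact Prod.ext (funext fun u => h u.1 (hBA u.1 u.2)) (funext fun u => h u.1 (hCA u.1 u.2))
  have heB : IsSplit B (eA.trans sw) := by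
    constructor <;> intro x y
    · exact ⟨fun h u hu => congrFun h ⟨u, hu⟩, fun h => funext fun u => h u.1 u.2⟩
    · constructor
      · intro h u hu
        have h' := Prod.ext_iff.1 h
        by_cases h2 : u ∈ A
        · exact congrFun h'.1 ⟨u, h2⟩
        · exact congrFun h'.2 ⟨u, hcov u h2 hu⟩
      · intro h
        exact Prod.ext (funext fun u => h u.1 (Finset.disjoint_left.1 hAB u.2))
          (funext fun u => h u.1 (hCB u.1 u.2))
  obtain ⟨cA, hcA⟩ := hA.gram heA
  obtain ⟨cB, hcB⟩ := hB.gram heB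
  have := rank_le_of_tripartite code.proj code.proj_conjTranspose code.proj_idem
    code.proj_ne_zero eA (eA.trans sw) (fun a b c => rfl) cA cB hcA hcB
  simpa using this

end Correctability

end CommProjCode

/-! ### Correctable regions of the square lattice -/

namespace CommProjCode

section Geometry

variable {q L : ℕ} {code : CommProjCode q (Fin L × Fin L)}

/-- Two sites acted on by a common constraint differ by less than `w` in each coordinate. -/
def Local (code : CommProjCode q (Fin L × Fin L)) (w : ℕ) : Prop :=
  ∀ a, ∀ u ∈ code.S a, ∀ v ∈ code.S a, u.1.val < v.1.val + w ∧ u.2.val < v.2.val + w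

lemma Local.separated {w : ℕ} (hl : code.Local w) {M D : Finset (Fin L × Fin L)}
    (h : ∀ u ∈ M, ∀ v ∈ D, u.1.val < v.1.val + w → v.1.val < u.1.val + w →
      u.2.val < v.2.val + w → v.2.val < u.2.val + w → False) : code.Separated M D := by
  intro a
  by_contra! hcon
  obtain ⟨u, hu, huM⟩ := Finset.not_disjoint_iff.1 hcon.1
  obtain ⟨v, hv, hvD⟩ := Finset.not_disjoint_iff.1 hcon.2
  have h1 := hl a u hu v hv
  have h2 := hl a v hv u hu
  exact h u huM v hvD h1.1 h2.1 h1.2 h2.2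

lemma card_rect_le (M : Finset (Fin L × Fin L)) (i m j n : ℕ)
    (h : ∀ u ∈ M, i ≤ u.1.val ∧ u.1.val < i + m ∧ j ≤ u.2.val ∧ u.2.val < j + n) :
    M.card ≤ m * n := by
  have h1 : M.card ≤ (Finset.Ico i (i + m) ×ˢ Finset.Ico j (j + n)).card := by
    refine Finset.card_le_card_of_injOn (fun u => (u.1.val, u.2.val)) ?_ ?_
    · intro u hu
      obtain ⟨h1, h2, h3, h4⟩ := h u hu
      simp [h1, h2, h3, h4]
    · intro u _ v _ huv
      simp only [Prod.mk.injEq] at huv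
      exact Prod.ext (Fin.ext huv.1) (Fin.ext huv.2)
  simpa using h1

/-- The square with lower corner `(i, j)` and side `R`, with a margin of width `t` removed. -/
def box (L R i j t : ℕ) : Finset (Fin L × Fin L) :=
  Finset.univ.filter fun u =>
    i + t ≤ u.1.val ∧ u.1.val + t < i + R ∧ j + t ≤ u.2.val ∧ u.2.val + t < j + R

lemma mem_box {R i j t : ℕ} {u : Fin L × Fin L} : u ∈ box L R i j t ↔
    i + t ≤ u.1.val ∧ u.1.val + t < i + R ∧ j + t ≤ u.2.val ∧ u.2.val + t < j + R := by
  simp [box]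

/-- A frame of width `w` consists of four strips. -/
lemma card_frame_le (R i j t w : ℕ) :
    (box L R i j t \ box L R i j (t + w)).card ≤ 4 * w * R := by
  set F := box L R i j t \ box L R i j (t + w)
  have hF : ∀ u ∈ F, (i ≤ u.1.val ∧ u.1.val < i + R ∧ j ≤ u.2.val ∧ u.2.val < j + R) ∧
      ((i + t ≤ u.1.val ∧ u.1.val < i + t + w) ∨
        (i + (R - t - w) ≤ u.1.val ∧ u.1.val < i + (R - t - w) + w) ∨
        (j + t ≤ u.2.val ∧ u.2.val < j + t + w) ∨
        (j + (R - t - w) ≤ u.2.val ∧ u.2.val < j + (R - t - w) + w)) := by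
    intro u hu
    rw [Finset.mem_sdiff, mem_box, mem_box] at hu
    omega
  let G₁ := F.filter fun u => i + t ≤ u.1.val ∧ u.1.val < i + t + w
  let G₂ := F.filter fun u => i + (R - t - w) ≤ u.1.val ∧ u.1.val < i + (R - t - w) + w
  let G₃ := F.filter fun u => j + t ≤ u.2.val ∧ u.2.val < j + t + w
  let G₄ := F.filter fun u => j + (R - t - w) ≤ u.2.val ∧ u.2.val < j + (R - t - w) + w
  have hsub : F ⊆ (G₁ ∪ G₂) ∪ (G₃ ∪ G₄) := by
    intro u hu
    have := (hF u hu).2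
    simp only [G₁, G₂, G₃, G₄, Finset.mem_union, Finset.mem_filter, hu, true_and]
    tauto
  have c1 : G₁.card ≤ w * R := card_rect_le _ (i + t) w j R fun u hu => by
    rw [Finset.mem_filter] at hu; have := (hF u hu.1).1; omega
  have c2 : G₂.card ≤ w * R := card_rect_le _ (i + (R - t - w)) w j R fun u hu => by
    rw [Finset.mem_filter] at hu; have := (hF u hu.1).1; omega
  have c3 : G₃.card ≤ R * w := card_rect_le _ i R (j + t) w fun u hu => by
    rw [Finset.mem_filter] at hu; have := (hF u hu.1).1; omega
  have c4 : G₄.card ≤ R * w := card_rect_le _ i R (j + (R - t - w)) w fun u hu => by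
    rw [Finset.mem_filter] at hu; have := (hF u hu.1).1; omega
  have h1 := Finset.card_le_card hsub
  have h2 := Finset.card_union_le (G₁ ∪ G₂) (G₃ ∪ G₄)
  have h3 := Finset.card_union_le G₁ G₂
  have h4 := Finset.card_union_le G₃ G₄
  have h5 : R * w = w * R := mul_comm _ _
  have h6 : 4 * w * R = w * R + w * R + (w * R + w * R) := by ring
  omega

/-- A square of side `R` with `4 w R < d` is correctable: starting from the empty centre, adjoin one
frame of width `w` after another. Each frame has at most `4 w R` sites and shields its interior. -/
lemma correctable_box {w d R : ℕ} (hw : 1 ≤ w) (hl : code.Local w)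
    (hd : ∀ M : Finset (Fin L × Fin L), M.card < d → code.Correctable M) (hR : 4 * w * R < d)
    (i j : ℕ) : code.Correctable (box L R i j 0) := by
  have key : ∀ n k, k + n = R → code.Correctable (box L R i j (k * w)) := by
    intro n
    induction n with
    | zero =>
      rintro k hk
      obtain rfl : k = R := by omega
      have h1 : k ≤ k * w := Nat.le_mul_of_pos_right _ hw
      have h2 : box L k i j (k * w) = ∅ := by
        ext u
        rw [mem_box]
        simp only [Finset.notMem_empty, iff_false]
        omega
      rw [h2]
      exact hd _ (by rw [Finset.card_empty]; omega)
    | succ n ih =>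
      intro k hk
      have h1 := ih (k + 1) (by omega)
      rw [Nat.succ_mul] at h1
      generalize k * w = t at h1 ⊢
      have h2 : box L R i j t = box L R i j (t + w) ∪ (box L R i j t \ box L R i j (t + w)) := by
        rw [Finset.union_sdiff_of_subset]
        intro u hu
        rw [mem_box] at hu ⊢
        omega
      have h3 : code.Correctable (box L R i j t \ box L R i j (t + w)) :=
        hd _ ((card_frame_le R i j t w).trans_lt hR)
      have h4 := h1.expand h3
      rw [← h2] at h4
      refine h4 (hl.separated fun u hu v hv => ?_)
      rw [Finset.mem_compl, mem_box] at hv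
      rw [mem_box] at hu
      omega
  simpa using key R 0 (by omega)

/-- A region cut into correctable pieces, the fibres of `f`, is correctable as soon as no
constraint touches two different pieces. -/
lemma correctable_of_fibers {w : ℕ} {ι : Type*} [DecidableEq ι] (hl : code.Local w)
    (h0 : code.Correctable ∅) (M : Finset (Fin L × Fin L)) (f : Fin L × Fin L → ι)
    (hf : ∀ i, code.Correctable (M.filter fun u => f u = i))
    (hM : ∀ u ∈ M, ∀ v ∈ M, u.1.val < v.1.val + w → v.1.val < u.1.val + w →
      u.2.val < v.2.val + w → v.2.val < u.2.val + w → f u = f v) : code.Correctable M := by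
  have key : ∀ s : Finset ι, code.Correctable (M.filter fun u => f u ∈ s) := by
    intro s
    induction s using Finset.induction_on with
    | empty => simpa using h0
    | insert i s his ih =>
      have h1 : (M.filter fun u => f u ∈ insert i s) =
          (M.filter fun u => f u = i) ∪ (M.filter fun u => f u ∈ s) := by
        rw [← Finset.filter_or]
        simp only [Finset.mem_insert]
      rw [h1]
      refine (hf i).union ih ?_ (hl.separated fun u hu v hv a1 a2 a3 a4 => ?_)
      · rw [Finset.disjoint_left]
        intro u hu hu'
        rw [Finset.mem_filter] at hu hu'
        exact his (hu.2 ▸ hu'.2)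
      · rw [Finset.mem_filter] at hu hv
        have := hM u hu.1 v hv.1 a1 a2 a3 a4
        rw [hu.2] at this
        exact his (this ▸ hv.2)
  have := key (Finset.univ.image f)
  rwa [Finset.filter_true_of_mem fun u _ => Finset.mem_image_of_mem _ (Finset.mem_univ _)] at this

end Geometry

end CommProjCode

/-! ### Residues modulo the tile side -/

/-- Two integers lie in the same period of length `R`, or their periods differ by at least one
full period. -/
lemma period_cases {R : ℕ} (hR : 0 < R) (x y : ℕ) : ∃ a b r s : ℕ,
    a = R * (x / R) ∧ b = R * (y / R) ∧ r = x % R ∧ s = y % R ∧ x = a + r ∧ y = b + s ∧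
    r < R ∧ s < R ∧ ((a = b ∧ x / R = y / R) ∨ a + R ≤ b ∨ b + R ≤ a) := by
  refine ⟨_, _, _, _, rfl, rfl, rfl, rfl, (Nat.div_add_mod x R).symm, (Nat.div_add_mod y R).symm,
    Nat.mod_lt _ hR, Nat.mod_lt _ hR, ?_⟩
  rcases lt_trichotomy (x / R) (y / R) with h | h | h
  · right; left
    calc R * (x / R) + R = R * (x / R + 1) := by ring
      _ ≤ R * (y / R) := Nat.mul_le_mul_left _ h
  · left; exact ⟨by rw [h], h⟩
  · right; right
    calc R * (y / R) + R = R * (y / R + 1) := by ring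
      _ ≤ R * (x / R) := Nat.mul_le_mul_left _ h

lemma div_eq_of_margin {R w x y : ℕ} (hR : 0 < R) (hx : w ≤ x % R) (hy : w ≤ y % R)
    (h1 : x < y + w) (h2 : y < x + w) : x / R = y / R := by
  obtain ⟨a, b, r, s, -, -, hr, hs, hxa, hyb, hrR, hsR, h⟩ := period_cases hR x y
  omega

lemma div_eq_of_start {R w x y : ℕ} (hR : 2 * w ≤ R) (hx : x % R < w) (hy : y % R < w)
    (h1 : x < y + w) (h2 : y < x + w) : x / R = y / R := by
  obtain ⟨a, b, r, s, -, -, hr, hs, hxa, hyb, hrR, hsR, h⟩ := period_cases (R := R) (by omega) x y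
  omega

lemma not_close {R w x y : ℕ} (hx : 2 * w ≤ x % R) (hx' : x % R + w < R) (hy : y % R < w)
    (h1 : x < y + w) (h2 : y < x + w) : False := by
  obtain ⟨a, b, r, s, -, -, hr, hs, hxa, hyb, hrR, hsR, h⟩ := period_cases (R := R) (by omega) x y
  omega

/-- About `3 w L / R` coordinates `x < L` lie less than `2 w` above or at most `w` below a multiple
of `R`. -/
lemma card_near_le (L R w : ℕ) :
    (Finset.univ.filter fun x : Fin L => x.val % R < 2 * w ∨ R ≤ x.val % R + w).card * R ≤
      3 * w * (L + R) := by
  rcases Nat.eq_zero_or_pos R with rfl | hR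
  · simp
  have h1 : (Finset.univ.filter fun x : Fin L => x.val % R < 2 * w ∨ R ≤ x.val % R + w).card ≤
      (Finset.range (L / R + 1) ×ˢ (Finset.range (2 * w) ∪ Finset.Ico (R - w) R)).card := by
    refine Finset.card_le_card_of_injOn (fun x => (x.val / R, x.val % R)) ?_ ?_
    · intro x hx
      have hx2 : x.val % R < 2 * w ∨ R ≤ x.val % R + w := by simpa using hx
      have h2 : x.val / R ≤ L / R := Nat.div_le_div_right x.2.le
      have h3 := Nat.mod_lt x.val hR
      simp only [Finset.coe_product, Set.mem_prod, Finset.mem_coe, Finset.mem_range,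
        Finset.mem_union, Finset.mem_Ico]
      omega
    · intro x _ y _ hxy
      simp only [Prod.mk.injEq] at hxy
      apply Fin.ext
      rw [← Nat.div_add_mod x.val R, ← Nat.div_add_mod y.val R, hxy.1, hxy.2]
  have h2 : (Finset.range (2 * w) ∪ Finset.Ico (R - w) R).card ≤ 3 * w := by
    refine (Finset.card_union_le _ _).trans ?_
    rw [Finset.card_range, Nat.card_Ico]
    omega
  rw [Finset.card_product, Finset.card_range] at h1
  have h3 : L / R * R ≤ L := Nat.div_mul_le_self L R
  calc _ ≤ ((L / R + 1) * (3 * w)) * R :=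
        Nat.mul_le_mul_right _ (h1.trans (Nat.mul_le_mul_left _ h2))
    _ = 3 * w * (L / R * R + R) := by ring
    _ ≤ _ := by gcongr

/-! ### The tiling and the tradeoff -/

namespace CommProjCode

section Tiling

variable {q L : ℕ} {code : CommProjCode q (Fin L × Fin L)}

/-- The cells of the tiling: all sites at distance at least `w` from the lower sides of their
`R × R` tile. -/
def cells (L R w : ℕ) : Finset (Fin L × Fin L) :=
  Finset.univ.filter fun u => w ≤ u.1.val % R ∧ w ≤ u.2.val % R

/-- The corridors of the tiling: strips of width `w` along the lower sides of the tiles, kept away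
from the corners. -/
def corridors (L R w : ℕ) : Finset (Fin L × Fin L) :=
  Finset.univ.filter fun u =>
    (u.2.val % R < w ∧ 2 * w ≤ u.1.val % R ∧ u.1.val % R + w < R) ∨
    (u.1.val % R < w ∧ 2 * w ≤ u.2.val % R ∧ u.2.val % R + w < R)

lemma disjoint_cells_corridors (R w : ℕ) : Disjoint (cells L R w) (corridors L R w) := by
  rw [Finset.disjoint_left]
  intro u hu hu'
  simp only [cells, corridors, Finset.mem_filter, Finset.mem_univ, true_and] at hu hu'
  omega

lemma correctable_cells {w d R : ℕ} (hw : 1 ≤ w) (hl : code.Local w)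
    (hd : ∀ M : Finset (Fin L × Fin L), M.card < d → code.Correctable M) (hR : 4 * w * R < d)
    (hR0 : 0 < R) : code.Correctable (cells L R w) := by
  refine correctable_of_fibers hl (hd _ (by rw [Finset.card_empty]; omega)) _
    (fun u => (u.1.val / R, u.2.val / R)) ?_ ?_
  · rintro ⟨a, b⟩
    refine (correctable_box hw hl hd hR (R * a) (R * b)).mono fun u hu => ?_
    rw [Finset.mem_filter, Prod.mk.injEq] at hu
    obtain ⟨-, rfl, rfl⟩ := hu
    have h1 := Nat.div_add_mod u.1.val R
    have h2 := Nat.div_add_mod u.2.val R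
    have h3 := Nat.mod_lt u.1.val hR0
    have h4 := Nat.mod_lt u.2.val hR0
    rw [mem_box]
    omega
  · intro u hu v hv h1 h2 h3 h4
    simp only [cells, Finset.mem_filter, Finset.mem_univ, true_and] at hu hv
    exact Prod.ext (div_eq_of_margin hR0 hu.1 hv.1 h1 h2) (div_eq_of_margin hR0 hu.2 hv.2 h3 h4)

lemma correctable_corridors {w d R : ℕ} (hl : code.Local w)
    (hd : ∀ M : Finset (Fin L × Fin L), M.card < d → code.Correctable M) (hR : 4 * w * R < d)
    (hR0 : 0 < R) : code.Correctable (corridors L R w) := by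
  refine correctable_of_fibers hl (hd _ (by rw [Finset.card_empty]; omega)) _
    (fun u => (decide (u.2.val % R < w), u.1.val / R, u.2.val / R)) ?_ ?_
  · rintro ⟨t, a, b⟩
    apply hd
    have hlt : w * R < d := lt_of_le_of_lt (by nlinarith [Nat.zero_le (w * R)]) hR
    refine lt_of_le_of_lt ?_ hlt
    cases t with
    | true =>
      rw [mul_comm w R]
      refine card_rect_le _ (R * a) R (R * b) w fun u hu => ?_
      simp only [corridors, Finset.mem_filter, Finset.mem_univ, true_and, Prod.mk.injEq,
        decide_eq_true_eq] at hu
      obtain ⟨h, h0, rfl, rfl⟩ := hu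
      have h1 := Nat.div_add_mod u.1.val R
      have h2 := Nat.div_add_mod u.2.val R
      have h3 := Nat.mod_lt u.1.val hR0
      omega
    | false =>
      refine card_rect_le _ (R * a) w (R * b) R fun u hu => ?_
      simp only [corridors, Finset.mem_filter, Finset.mem_univ, true_and, Prod.mk.injEq,
        decide_eq_false_iff_not] at hu
      obtain ⟨h, h0, rfl, rfl⟩ := hu
      have h1 := Nat.div_add_mod u.1.val R
      have h2 := Nat.div_add_mod u.2.val R
      have h3 := Nat.mod_lt u.2.val hR0
      omega
  · intro u hu v hv h1 h2 h3 h4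
    simp only [corridors, Finset.mem_filter, Finset.mem_univ, true_and] at hu hv
    rcases hu with ⟨u1, u2, u3⟩ | ⟨u1, u2, u3⟩ <;> rcases hv with ⟨v1, v2, v3⟩ | ⟨v1, v2, v3⟩
    · simp only [u1, v1, Prod.mk.injEq, true_and]
      exact ⟨div_eq_of_margin hR0 (by omega) (by omega) h1 h2,
        div_eq_of_start (by omega) u1 v1 h3 h4⟩
    · exact (not_close u2 u3 v1 h1 h2).elim
    · exact (not_close v2 v3 u1 h2 h1).elim
    · have hu' : ¬ u.2.val % R < w := by omega
      have hv' : ¬ v.2.val % R < w := by omega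
      simp only [hu', hv', Prod.mk.injEq, true_and]
      exact ⟨div_eq_of_start (by omega) u1 v1 h1 h2,
        div_eq_of_margin hR0 (by omega) (by omega) h3 h4⟩

/-- Both coordinates of a site outside all cells and corridors are close to multiples of `R`. -/
lemma card_corners_le {R w : ℕ} (hRL : R ≤ L) :
    ((cells L R w ∪ corridors L R w)ᶜ).card * R ^ 2 ≤ (6 * w * L) ^ 2 := by
  set Z := Finset.univ.filter fun x : Fin L => x.val % R < 2 * w ∨ R ≤ x.val % R + w with hZ
  have h1 : (cells L R w ∪ corridors L R w)ᶜ ⊆ Z ×ˢ Z := by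
    intro u hu
    simp only [cells, corridors, Finset.mem_compl, Finset.mem_union, Finset.mem_filter,
      Finset.mem_univ, true_and] at hu
    simp only [hZ, Finset.mem_product, Finset.mem_filter, Finset.mem_univ, true_and]
    omega
  have h2 := Finset.card_le_card h1
  rw [Finset.card_product] at h2
  have h3 : Z.card * R ≤ 6 * w * L := (card_near_le L R w).trans (by nlinarith)
  calc _ ≤ Z.card * Z.card * R ^ 2 := Nat.mul_le_mul_right _ h2
    _ = (Z.card * R) ^ 2 := by ring
    _ ≤ _ := Nat.pow_le_pow_left h3 2

/-- The tile side is `R = (d - 1) / (4 w)`, the largest one with `4 w R < d`; it satisfies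
`d ≤ 4 w (R + 1)`, so that `R` is comparable to `d / w` unless `d ≤ 4 w`. -/
lemma exists_rank_le {w d : ℕ} (hw : 1 ≤ w) (hl : code.Local w) (hd1 : 1 ≤ d)
    (hd : ∀ M : Finset (Fin L × Fin L), M.card < d → code.Correctable M) :
    ∃ k, code.proj.rank ≤ q ^ k ∧ k * d ^ 2 ≤ 2304 * w ^ 4 * L ^ 2 := by
  have h0 : code.Correctable ∅ := hd _ (by rw [Finset.card_empty]; omega)
  obtain ⟨R, hR, hR'⟩ : ∃ R, 4 * w * R < d ∧ d ≤ 4 * w * (R + 1) := by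
    have h1 := Nat.div_add_mod (d - 1) (4 * w)
    have h2 := Nat.mod_lt (d - 1) (show 0 < 4 * w by omega)
    refine ⟨(d - 1) / (4 * w), by omega, ?_⟩
    rw [mul_add]
    omega
  have hw2 : w ^ 2 ≤ w ^ 4 := Nat.pow_le_pow_right hw (by norm_num)
  rcases Nat.eq_zero_or_pos R with rfl | hR0
  · -- The distance is bounded, and the trivial bound on the rank suffices.
    refine ⟨L * L, ?_, ?_⟩
    · simpa using rank_le_pow h0 h0 (Finset.disjoint_empty_left _) rfl
    · have h1 : d ^ 2 ≤ (4 * w) ^ 2 := Nat.pow_le_pow_left (by simpa using hR') 2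
      calc L * L * d ^ 2 ≤ L * L * (4 * w) ^ 2 := Nat.mul_le_mul_left _ h1
        _ = 16 * w ^ 2 * L ^ 2 := by ring
        _ ≤ 2304 * w ^ 4 * L ^ 2 := by gcongr; norm_num
  rcases Nat.lt_or_ge L R with hLR | hRL
  · -- A single tile covers the lattice, so the whole lattice is correctable.
    refine ⟨0, ?_, by simp⟩
    have h1 : box L R 0 0 0 = Finset.univ := by
      ext u
      rw [mem_box]
      simp only [Finset.mem_univ, iff_true]
      omega
    have h2 := correctable_box hw hl hd hR 0 0
    rw [h1] at h2
    simpa using rank_le_pow h2 h0 (Finset.disjoint_empty_right _) rfl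
  · refine ⟨_, rank_le_pow (correctable_cells hw hl hd hR hR0)
      (correctable_corridors hl hd hR hR0) (disjoint_cells_corridors R w) rfl, ?_⟩
    have h1 : d ^ 2 ≤ (8 * w * R) ^ 2 := Nat.pow_le_pow_left (by nlinarith) 2
    calc _ ≤ ((cells L R w ∪ corridors L R w)ᶜ).card * (8 * w * R) ^ 2 := Nat.mul_le_mul_left _ h1
      _ = ((cells L R w ∪ corridors L R w)ᶜ).card * R ^ 2 * (64 * w ^ 2) := by ring
      _ ≤ (6 * w * L) ^ 2 * (64 * w ^ 2) := Nat.mul_le_mul_right _ (card_corners_le hRL)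
      _ = 2304 * w ^ 4 * L ^ 2 := by ring

end Tiling

end CommProjCode

/-- **Tradeoff for 2D commuting-projector codes** (Bravyi–Poulin–Terhal).
For every interaction range `w ≥ 1` and qudit dimension `q ≥ 2` there is a constant
`c > 0` such that for every `L ≥ 1`, every commuting-projector code on the
`L × L` square lattice whose constraints are supported on `w × w` squares, and
every `d ≥ 1` such that all regions of size `< d` are correctable, the number of
encoded qubits obeys `k = log₂ rank Π ≤ c n / d²` with `n = L²`. -/
theorem quantum_tradeoff_2d :
    ∀ w q : ℕ, 1 ≤ w → 2 ≤ q → ∃ c : ℝ, 0 < c ∧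
      ∀ L : ℕ, 1 ≤ L → ∀ code : CommProjCode q (Fin L × Fin L),
        (∀ a : Fin code.m, ∃ i j : ℕ, ∀ u ∈ code.S a,
            i ≤ u.1.val ∧ u.1.val < i + w ∧ j ≤ u.2.val ∧ u.2.val < j + w) →
        ∀ d : ℕ, 1 ≤ d →
          (∀ M : Finset (Fin L × Fin L), M.card < d → code.Correctable M) →
          Real.logb 2 (code.proj.rank) ≤ c * ((L : ℝ) ^ 2) / ((d : ℝ) ^ 2) := by
  intro w q hw hq
  have hq' : (2 : ℝ) ≤ q := by exact_mod_cast hq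
  have hlog : 0 < Real.logb 2 q := Real.logb_pos (by norm_num) (by linarith)
  have hw' : (0 : ℝ) < w := by exact_mod_cast hw
  refine ⟨2304 * (w : ℝ) ^ 4 * Real.logb 2 q, by positivity, ?_⟩
  intro L _ code hloc d hd1 hd
  have hl : code.Local w := by
    intro a u hu v hv
    obtain ⟨i, j, h⟩ := hloc a
    have h1 := h u hu
    have h2 := h v hv
    omega
  obtain ⟨k, hk, hkd⟩ := CommProjCode.exists_rank_le hw hl hd1 hd
  have hd' : (0 : ℝ) < (d : ℝ) ^ 2 := by positivity
  have hrank : (0 : ℝ) < code.proj.rank := Nat.cast_pos.2 (rank_pos_of_ne_zero code.proj_ne_zero)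
  have h1 : Real.logb 2 code.proj.rank ≤ k * Real.logb 2 q := by
    rw [← Real.logb_pow]
    exact Real.logb_le_logb_of_le (by norm_num) hrank (by exact_mod_cast hk)
  have h2 : (k : ℝ) * (d : ℝ) ^ 2 ≤ 2304 * (w : ℝ) ^ 4 * (L : ℝ) ^ 2 := by exact_mod_cast hkd
  rw [le_div_iff₀ hd']
  calc Real.logb 2 code.proj.rank * (d : ℝ) ^ 2 ≤ k * Real.logb 2 q * (d : ℝ) ^ 2 := by gcongr
    _ = k * (d : ℝ) ^ 2 * Real.logb 2 q := by ring
    _ ≤ 2304 * (w : ℝ) ^ 4 * (L : ℝ) ^ 2 * Real.logb 2 q := by gcongr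
    _ = _ := by ring
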